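/- arXiv:2511.02705 — 2 statements merged into one kernel-verified Lean document; each statement's English description precedes it below -/
import Mathlib

section
/- Let G = (V, E⁺, E⁻, F, H) be a ConstrainedCC instance and let Ĝ = (V, Ê⁺, Ê⁻) be a signed graph on V that is pivot-safe for G. Then every pivot clustering of Ĝ, regardless of the choice of pivot vertices, is a feasible clustering for G. -/
/-!
The closed positive neighbourhood `{p} ∪ {v | pos p v}` of any pivot is a union of supernodes and
never meets two hostile supernodes: these are exactly the two clauses of pivot-safety, together
with the case where one of the vertices is the pivot itself. Hence, by induction on the pivot
process, the set of unclustered vertices always remains a union of supernodes, each cluster is a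
union of supernodes, and no cluster meets two hostile ones. Distinct rounds produce distinct
labels because the labels of later rounds are pivots taken from the remaining vertices. Every
friendly pair lies in one supernode; every hostile pair lies in two distinct (hence hostile)
supernodes because a feasible clustering exists.
-/

open scoped Classical

namespace CCC

/-- A Constrained Correlation Clustering instance: a partition of the unordered
pairs of distinct vertices into positive edges `Ep` and negative edges `En`,
together with friendly constraints `F` and hostile constraints `H`. -/
structure CCInst (V : Type*) where
  Ep : Finset (Sym2 V)
  En : Finset (Sym2 V)
  F : Finset (Sym2 V)
  H : Finset (Sym2 V)
  mem_Ep_iff : ∀ e : Sym2 V, e ∈ Ep ↔ (¬ e.IsDiag ∧ e ∉ En)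
  not_isDiag_of_mem_En : ∀ e ∈ En, ¬ e.IsDiag
  not_isDiag_of_mem_F : ∀ e ∈ F, ¬ e.IsDiag
  not_isDiag_of_mem_H : ∀ e ∈ H, ¬ e.IsDiag

variable {V : Type*} [Fintype V] [DecidableEq V]

/-- `u` and `v` lie in the same supernode (connected component of `(V, F)`). -/
def sameSuper (G : CCInst V) (u v : V) : Prop :=
  Relation.ReflTransGen (fun a b => s(a, b) ∈ G.F) u v

/-- The (distinct) supernodes of `u` and `v` are hostile. -/
def hostileSuper (G : CCInst V) (u v : V) : Prop :=
  ¬ sameSuper G u v ∧ ∃ a b : V, sameSuper G u a ∧ sameSuper G v b ∧ s(a, b) ∈ G.H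

/-- A clustering is feasible if it merges all friendly pairs and separates all hostile pairs. -/
def Feasible (G : CCInst V) {L : Type*} (C : V → L) : Prop :=
  (∀ u v : V, s(u, v) ∈ G.F → C u = C v) ∧ ∀ u v : V, s(u, v) ∈ G.H → C u ≠ C v

/-- The cost of a clustering: positive edges cut plus negative edges not cut. -/
noncomputable def cost (G : CCInst V) {L : Type*} (C : V → L) : ℕ :=
  (G.Ep.filter fun e => ¬ (e.map C).IsDiag).card +
    (G.En.filter fun e => (e.map C).IsDiag).card

/-- `G` is in consistent form. -/
def ConsistentForm (G : CCInst V) : Prop :=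
  (∀ u v : V, u ≠ v → sameSuper G u v → s(u, v) ∈ G.Ep) ∧
    ∀ u v : V, hostileSuper G u v → s(u, v) ∈ G.En

/-- `G` is the consistent form of `G0`. -/
def IsConsistentFormOf (G G0 : CCInst V) : Prop :=
  G.F = G0.F ∧ G.H = G0.H ∧
    ∀ u v : V, u ≠ v →
      (sameSuper G0 u v → s(u, v) ∈ G.Ep) ∧
      (hostileSuper G0 u v → s(u, v) ∈ G.En) ∧
      (¬ sameSuper G0 u v → ¬ hostileSuper G0 u v → (s(u, v) ∈ G.Ep ↔ s(u, v) ∈ G0.Ep))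

/-- `(e, f)` is a dangerous pair: `e = ab`, `f = cd` are positive edges with
`s(b) = s(c)` and `(S(a), S(d)) ∈ H`. -/
def IsDangerousPair (G : CCInst V) (e f : Sym2 V) : Prop :=
  ∃ a b c d : V, e = s(a, b) ∧ f = s(c, d) ∧ e ∈ G.Ep ∧ f ∈ G.Ep ∧
    sameSuper G b c ∧ hostileSuper G a d

/-- The edge `e` occurs in the pair `p`. -/
def InPair (e : Sym2 V) (p : Sym2 V × Sym2 V) : Prop := e = p.1 ∨ e = p.2

/-- Every edge occurs in at most one member of `D`. -/
def EdgeDisjoint (D : Finset (Sym2 V × Sym2 V)) : Prop :=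
  ∀ p ∈ D, ∀ q ∈ D, ∀ e : Sym2 V, InPair e p → InPair e q → p = q

/-- `D` is an edge-disjoint set of dangerous pairs. -/
def DangerousFamily (G : CCInst V) (D : Finset (Sym2 V × Sym2 V)) : Prop :=
  (∀ p ∈ D, IsDangerousPair G p.1 p.2) ∧ EdgeDisjoint D

/-- `D` is a maximal edge-disjoint set of dangerous pairs. -/
def MaximalDangerous (G : CCInst V) (D : Finset (Sym2 V × Sym2 V)) : Prop :=
  DangerousFamily G D ∧
    ∀ e f : Sym2 V, IsDangerousPair G e f → EdgeDisjoint (insert (e, f) D) → (e, f) ∈ D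

/-- `E_𝒟`: the set of edges occurring in members of `D`. -/
def EDset (D : Finset (Sym2 V × Sym2 V)) : Set (Sym2 V) :=
  {e | ∃ p ∈ D, InPair e p}

/-- `f` is the partner edge `ρ(e)` of `e` in `D`. -/
def Partner (D : Finset (Sym2 V × Sym2 V)) (e f : Sym2 V) : Prop :=
  (e, f) ∈ D ∨ (f, e) ∈ D

/-- The induced edge value `x_{uv}` of an LP solution. -/
noncomputable def xval (G : CCInst V) (Xp Xn : Sym2 V → ℝ) (e : Sym2 V) : ℝ :=
  if e ∈ G.Ep then Xp e else Xn e

/-- The LP objective value `∑_{uv} x_{uv}`, summed over all unordered pairs of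
distinct vertices. -/
noncomputable def lpObj (G : CCInst V) (Xp Xn : Sym2 V → ℝ) : ℝ :=
  ∑ e ∈ Finset.univ.filter (fun e : Sym2 V => ¬ e.IsDiag), xval G Xp Xn e

/-- `(Xp, Xn)` is a feasible solution of the constrained covering LP (with
HEAP constraints coming from the dangerous pairs `D`).  The variables are
indexed by unordered pairs of vertices but must only depend on the pair of
supernodes of the endpoints. -/
structure IsLPSol (G : CCInst V) (D : Finset (Sym2 V × Sym2 V))
    (Xp Xn : Sym2 V → ℝ) : Prop where
  nonneg_p : ∀ e : Sym2 V, 0 ≤ Xp e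
  nonneg_n : ∀ e : Sym2 V, 0 ≤ Xn e
  congr_p : ∀ u v u' v' : V, sameSuper G u u' → sameSuper G v v' →
    Xp s(u, v) = Xp s(u', v')
  congr_n : ∀ u v u' v' : V, sameSuper G u u' → sameSuper G v v' →
    Xn s(u, v) = Xn s(u', v')
  same_p : ∀ u v : V, sameSuper G u v → Xp s(u, v) = 0
  same_n : ∀ u v : V, sameSuper G u v → Xn s(u, v) = 1
  host_n : ∀ u v : V, hostileSuper G u v → Xn s(u, v) = 0
  host_p : ∀ u v : V, hostileSuper G u v → Xp s(u, v) = 1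
  tri_ppn : ∀ a b c : V, ¬ sameSuper G a b → ¬ sameSuper G b c → ¬ sameSuper G a c →
    1 ≤ Xp s(a, b) + Xp s(b, c) + Xn s(a, c)
  tri_pnp : ∀ a b c : V, ¬ sameSuper G a b → ¬ sameSuper G b c → ¬ sameSuper G a c →
    1 ≤ Xp s(a, b) + Xn s(b, c) + Xp s(a, c)
  tri_npp : ∀ a b c : V, ¬ sameSuper G a b → ¬ sameSuper G b c → ¬ sameSuper G a c →
    1 ≤ Xn s(a, b) + Xp s(b, c) + Xp s(a, c)
  pair : ∀ u v : V, 1 ≤ Xp s(u, v) + Xn s(u, v)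
  heap : ∀ a b c k l : V, s(a, b) ∈ G.Ep → s(b, c) ∈ G.Ep → s(a, c) ∈ G.Ep →
    ¬ sameSuper G a b → ¬ sameSuper G c b → s(a, c) ∈ EDset D →
    Partner D s(a, c) s(k, l) →
    1 ≤ xval G Xp Xn s(a, b) + xval G Xp Xn s(b, c) + xval G Xp Xn s(k, l)

/-- `uv ∈ Ê⁺`: positive edges of the auxiliary graph `Ĝ`. -/
def hatPos (G : CCInst V) (D : Finset (Sym2 V × Sym2 V)) (Xp Xn : Sym2 V → ℝ)
    (u v : V) : Prop :=
  u ≠ v ∧ (sameSuper G u v ∨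
    ((∃ a b : V, sameSuper G u a ∧ sameSuper G v b ∧ s(a, b) ∈ G.Ep ∧ s(a, b) ∉ EDset D) ∧
      Xp s(u, v) < min (Xn s(u, v)) (2 / 3)))

/-- `uv ∈ Ê⁻`: negative edges of the auxiliary graph `Ĝ`. -/
def hatNeg (G : CCInst V) (D : Finset (Sym2 V × Sym2 V)) (Xp Xn : Sym2 V → ℝ)
    (u v : V) : Prop :=
  u ≠ v ∧ ¬ hatPos G D Xp Xn u v

/-- `Ê⁺` as a predicate on unordered pairs. -/
def hatPosE (G : CCInst V) (D : Finset (Sym2 V × Sym2 V)) (Xp Xn : Sym2 V → ℝ)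
    (e : Sym2 V) : Prop :=
  ∃ u v : V, e = s(u, v) ∧ hatPos G D Xp Xn u v

/-- `Ê⁻` as a predicate on unordered pairs. -/
def hatNegE (G : CCInst V) (D : Finset (Sym2 V × Sym2 V)) (Xp Xn : Sym2 V → ℝ)
    (e : Sym2 V) : Prop :=
  ¬ e.IsDiag ∧ ¬ hatPosE G D Xp Xn e

/-- `E^{+-} = E⁺ ∩ Ê⁻`. -/
noncomputable def Epm (G : CCInst V) (D : Finset (Sym2 V × Sym2 V)) (Xp Xn : Sym2 V → ℝ) :
    Finset (Sym2 V) :=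
  G.Ep.filter fun e => hatNegE G D Xp Xn e

/-- The balanced edges `E^b ⊆ E^{+-}`. -/
noncomputable def Eb (G : CCInst V) (D : Finset (Sym2 V × Sym2 V)) (Xp Xn : Sym2 V → ℝ) :
    Finset (Sym2 V) :=
  (Epm G D Xp Xn).filter fun e =>
    e ∈ EDset D ∧ ∀ f : Sym2 V, Partner D e f → f ∈ Epm G D Xp Xn

/-- The other flipped positive edges `E^o = E^{+-} \ E^b`. -/
noncomputable def Eo (G : CCInst V) (D : Finset (Sym2 V × Sym2 V)) (Xp Xn : Sym2 V → ℝ) :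
    Finset (Sym2 V) :=
  Epm G D Xp Xn \ Eb G D Xp Xn

/-- A signed graph (given by its positive-edge relation `pos`) is pivot-safe for `G`. -/
def PivotSafe (G : CCInst V) (pos : V → V → Prop) : Prop :=
  (∀ i j : V, i ≠ j → sameSuper G i j →
    pos i j ∧ ∀ k : V, k ≠ i → k ≠ j → (pos i k ↔ pos j k)) ∧
  ∀ i j : V, hostileSuper G i j → ¬ pos i j ∧ ∀ k : V, ¬ (pos i k ∧ pos j k)

/-- `PivotClust pos S C`: the assignment `C` (mapping every vertex of `S` to
the pivot of its cluster) is obtainable by running the pivot procedure on the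
vertex set `S` of the signed graph whose positive edges are given by `pos`. -/
inductive PivotClust (pos : V → V → Prop) : Finset V → (V → V) → Prop where
  | nil (C : V → V) : PivotClust pos ∅ C
  | step (S : Finset V) (p : V) (C : V → V) (hp : p ∈ S)
      (h : PivotClust pos (S.filter fun v => ¬ (v = p ∨ pos p v)) C) :
      PivotClust pos S (fun v => if v ∈ S ∧ (v = p ∨ pos p v) then p else C v)

/-- `T_p⁺` inside the vertex subset `W`. -/
noncomputable def Tpos (G : CCInst V) (D : Finset (Sym2 V × Sym2 V)) (Xp Xn : Sym2 V → ℝ)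
    (W : Finset V) (p : V) : Finset (Sym2 V) :=
  Finset.univ.filter fun e : Sym2 V => ∃ u v : V, e = s(u, v) ∧ u ∈ W ∧ v ∈ W ∧
    hatPos G D Xp Xn u v ∧ hatPos G D Xp Xn p u ∧ hatNeg G D Xp Xn p v

/-- `T_p⁻` inside the vertex subset `W`. -/
noncomputable def Tneg (G : CCInst V) (D : Finset (Sym2 V × Sym2 V)) (Xp Xn : Sym2 V → ℝ)
    (W : Finset V) (p : V) : Finset (Sym2 V) :=
  Finset.univ.filter fun e : Sym2 V => ∃ u v : V, e = s(u, v) ∧ u ∈ W ∧ v ∈ W ∧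
    hatNeg G D Xp Xn u v ∧ hatPos G D Xp Xn p u ∧ hatPos G D Xp Xn p v

/-- `A_p⁻ = T_p⁻ \ E^b`. -/
noncomputable def Aneg (G : CCInst V) (D : Finset (Sym2 V × Sym2 V)) (Xp Xn : Sym2 V → ℝ)
    (W : Finset V) (p : V) : Finset (Sym2 V) :=
  (Tneg G D Xp Xn W p).filter fun e => e ∉ Eb G D Xp Xn

/-- `B_p⁻ = T_p⁻ ∩ E^b`. -/
noncomputable def Bneg (G : CCInst V) (D : Finset (Sym2 V × Sym2 V)) (Xp Xn : Sym2 V → ℝ)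
    (W : Finset V) (p : V) : Finset (Sym2 V) :=
  (Tneg G D Xp Xn W p).filter fun e => e ∈ Eb G D Xp Xn

/-- `(Xp, Xn)` is a feasible solution of the friendly covering LP (no hostile
constraints and no HEAP constraints). -/
structure IsFriendlyLPSol (G : CCInst V) (Xp Xn : Sym2 V → ℝ) : Prop where
  nonneg_p : ∀ e : Sym2 V, 0 ≤ Xp e
  nonneg_n : ∀ e : Sym2 V, 0 ≤ Xn e
  congr_p : ∀ u v u' v' : V, sameSuper G u u' → sameSuper G v v' →
    Xp s(u, v) = Xp s(u', v')
  congr_n : ∀ u v u' v' : V, sameSuper G u u' → sameSuper G v v' →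
    Xn s(u, v) = Xn s(u', v')
  same_p : ∀ u v : V, sameSuper G u v → Xp s(u, v) = 0
  same_n : ∀ u v : V, sameSuper G u v → Xn s(u, v) = 1
  tri_ppn : ∀ a b c : V, ¬ sameSuper G a b → ¬ sameSuper G b c → ¬ sameSuper G a c →
    1 ≤ Xp s(a, b) + Xp s(b, c) + Xn s(a, c)
  tri_pnp : ∀ a b c : V, ¬ sameSuper G a b → ¬ sameSuper G b c → ¬ sameSuper G a c →
    1 ≤ Xp s(a, b) + Xn s(b, c) + Xp s(a, c)
  tri_npp : ∀ a b c : V, ¬ sameSuper G a b → ¬ sameSuper G b c → ¬ sameSuper G a c →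
    1 ≤ Xn s(a, b) + Xp s(b, c) + Xp s(a, c)
  pair : ∀ u v : V, 1 ≤ Xp s(u, v) + Xn s(u, v)

/-- `(e, f)` is a dangerous triangle in a HostileCC instance: positive edges
`e = ab`, `f = bc` with `ac ∈ H`. -/
def IsDangerousTriangle (G : CCInst V) (e f : Sym2 V) : Prop :=
  ∃ a b c : V, e = s(a, b) ∧ f = s(b, c) ∧ e ∈ G.Ep ∧ f ∈ G.Ep ∧ s(a, c) ∈ G.H

/-- The closed positive neighbourhood of `p` is a union of supernodes. -/
theorem closedNbhd_iff {V : Type*} (G : CCInst V) (pos : V → V → Prop)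
    (hsym : ∀ u v : V, pos u v → pos v u) (hsafe : PivotSafe G pos) (p : V) {u v : V}
    (h : sameSuper G u v) : (u = p ∨ pos p u) ↔ (v = p ∨ pos p v) := by
  by_cases huv : u = v
  · rw [huv]
  obtain ⟨hpos, hnbhd⟩ := hsafe.1 u v huv h
  by_cases hu : u = p
  · subst hu
    simp [hpos]
  by_cases hv : v = p
  · subst hv
    simp [hsym _ _ hpos]
  have hp := hnbhd p (Ne.symm hu) (Ne.symm hv)
  simp only [hu, hv, false_or]
  exact ⟨fun h => hsym _ _ (hp.1 (hsym _ _ h)), fun h => hsym _ _ (hp.2 (hsym _ _ h))⟩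

/-- The closed positive neighbourhood of `p` does not meet two hostile supernodes. -/
theorem not_both_closedNbhd {V : Type*} (G : CCInst V) (pos : V → V → Prop)
    (hsym : ∀ u v : V, pos u v → pos v u) (hsafe : PivotSafe G pos) (p : V) {u v : V}
    (h : hostileSuper G u v) : ¬ ((u = p ∨ pos p u) ∧ (v = p ∨ pos p v)) := by
  obtain ⟨hn, hk⟩ := hsafe.2 u v h
  rintro ⟨rfl | hu, rfl | hv⟩
  · exact h.1 Relation.ReflTransGen.refl
  · exact hn hv
  · exact hn (hsym _ _ hu)
  · exact hk p ⟨hsym _ _ hu, hsym _ _ hv⟩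

/-- The labels used on `S` are pivots chosen from `S`, so later rounds never reuse an earlier
pivot. -/
theorem PivotClust.label_mem {V : Type*} [DecidableEq V] {pos : V → V → Prop}
    {S : Finset V} {C : V → V}
    (h : PivotClust pos S C) : ∀ v ∈ S, C v ∈ S := by
  induction h with
  | nil C => simp
  | step S p C hp _ ih =>
    intro v hv
    by_cases hQ : v = p ∨ pos p v
    · simpa [hv, hQ] using hp
    · simpa [hQ] using Finset.mem_of_mem_filter _ (ih v (Finset.mem_filter.2 ⟨hv, hQ⟩))

/-- On a union of supernodes `S`, the pivot process keeps each supernode together and separates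
hostile supernodes. -/
theorem PivotClust.respects {V : Type*} [DecidableEq V] (G : CCInst V) {pos : V → V → Prop}
    (hsym : ∀ u v : V, pos u v → pos v u) (hsafe : PivotSafe G pos) {S : Finset V} {C : V → V}
    (h : PivotClust pos S C) (hS : ∀ u v : V, sameSuper G u v → u ∈ S → v ∈ S) :
    (∀ u ∈ S, ∀ v ∈ S, sameSuper G u v → C u = C v) ∧
      ∀ u ∈ S, ∀ v ∈ S, hostileSuper G u v → C u ≠ C v := by
  induction h with
  | nil C => simp
  | step S p C hp hC ih =>
    have hlabel : ∀ v ∈ S, ¬ (v = p ∨ pos p v) → C v ≠ p := by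
      intro v hv hQ hCv
      have hmem := hC.label_mem v (Finset.mem_filter.2 ⟨hv, hQ⟩)
      exact (Finset.mem_filter.1 hmem).2 (Or.inl hCv)
    obtain ⟨ihs, ihh⟩ := ih (by
      intro u v huv hu
      obtain ⟨huS, huQ⟩ := Finset.mem_filter.1 hu
      exact Finset.mem_filter.2 ⟨hS u v huv huS,
        fun hv => huQ ((closedNbhd_iff G pos hsym hsafe p huv).2 hv)⟩)
    refine ⟨fun u hu v hv huv => ?_, fun u hu v hv huv => ?_⟩
    · have hiff := closedNbhd_iff G pos hsym hsafe p huv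
      by_cases hQ : u = p ∨ pos p u
      · simp only [hu, hv, hQ, hiff.1 hQ, and_self, if_true]
      · have hQv : ¬ (v = p ∨ pos p v) := fun h => hQ (hiff.2 h)
        simp only [hQ, hQv, and_false, if_false]
        exact ihs u (Finset.mem_filter.2 ⟨hu, hQ⟩) v (Finset.mem_filter.2 ⟨hv, hQv⟩) huv
    · have hnot := not_both_closedNbhd G pos hsym hsafe p huv
      by_cases hQ : u = p ∨ pos p u
      · have hQv : ¬ (v = p ∨ pos p v) := fun h => hnot ⟨hQ, h⟩
        simp only [hu, hQ, hQv, and_false, and_self, if_true, if_false]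
        exact (hlabel v hv hQv).symm
      · by_cases hQv : v = p ∨ pos p v
        · simp only [hv, hQ, hQv, and_false, and_self, if_true, if_false]
          exact hlabel u hu hQ
        · simp only [hQ, hQv, and_false, if_false]
          exact ihh u (Finset.mem_filter.2 ⟨hu, hQ⟩) v (Finset.mem_filter.2 ⟨hv, hQv⟩) huv

/-- A feasible clustering is constant on each supernode. -/
theorem Feasible.eq_of_sameSuper {V L : Type*} (G : CCInst V) {C : V → L} (hC : Feasible G C)
    {u v : V} (h : sameSuper G u v) : C u = C v := by
  induction h with
  | refl => rfl
  | tail _ hbc ih => exact ih.trans (hC.1 _ _ hbc)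

/-- Running the pivot procedure on a signed graph that is
pivot-safe for `G` produces a feasible clustering for `G`, for any choice of
pivot vertices. -/
theorem stmt6 {V : Type*} [Fintype V] [DecidableEq V] (G : CCInst V)
    (pos : V → V → Prop) (hsym : ∀ u v : V, pos u v → pos v u)
    (hirr : ∀ u : V, ¬ pos u u)
    (hfeas : ∃ C0 : V → V, Feasible G C0)
    (hsafe : PivotSafe G pos)
    (C : V → V) (hC : PivotClust pos Finset.univ C) :
    Feasible G C := by
  obtain ⟨C0, hC0⟩ := hfeas
  obtain ⟨hs, hh⟩ := hC.respects G hsym hsafe fun _ _ _ _ => Finset.mem_univ _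
  refine ⟨fun u v huv => ?_, fun u v huv => ?_⟩
  · exact hs u (Finset.mem_univ u) v (Finset.mem_univ v) (Relation.ReflTransGen.single huv)
  · refine hh u (Finset.mem_univ u) v (Finset.mem_univ v)
      ⟨fun hsame => hC0.2 u v huv (hC0.eq_of_sameSuper G hsame), u, v, ?_, ?_, huv⟩
    · exact Relation.ReflTransGen.refl
    · exact Relation.ReflTransGen.refl

end CCC
end

section
/- Let G be a consistent-form ConstrainedCC instance, 𝒟 a maximal edge-disjoint set of dangerous pairs, (X⁺, X⁻) a feasible solution of the constrained covering LP with induced edge values x, and Ĝ the auxiliary graph. Then |E^b| ≤ 2 Σ_{ij ∈ E^b} x_{ij}. -/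
/-!
The partner map `ρ` is an involution of the balanced edges `E^b`: partners are unique because `D`
is edge-disjoint, and the definition of `E^b` is symmetric in an edge and its partner. Any dangerous
pair `(e, f)` satisfies `x_e + x_f ≥ 1` (`one_le_of_isDangerousPair`). Summing `x_e + x_{ρ(e)} ≥ 1`
over `E^b` and reindexing the second term along `ρ` gives the bound.
-/

open scoped Classical

namespace CCC

variable {V : Type*} [Fintype V] [DecidableEq V]

lemma sameSuper.symm {V : Type*} {G : CCInst V} {u v : V} (h : sameSuper G u v) :
    sameSuper G v u := by
  induction h with
  | refl => exact .refl
  | tail _ hbc ih => exact .head (by rwa [Sym2.eq_swap]) ih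

lemma sameSuper.trans {V : Type*} {G : CCInst V} {u v w : V} (h : sameSuper G u v)
    (h' : sameSuper G v w) : sameSuper G u w :=
  Relation.ReflTransGen.trans h h'

/-- A hostile relation between supernodes does not depend on the representative chosen
in the first one. -/
lemma hostileSuper.congr_left {V : Type*} {G : CCInst V} {u u' v : V}
    (h : hostileSuper G u v) (hu : sameSuper G u u') : hostileSuper G u' v := by
  obtain ⟨hn, a, b, ha, hb, hab⟩ := h
  exact ⟨fun h' => hn (hu.trans h'), a, b, hu.symm.trans ha, hb, hab⟩

lemma hostileSuper.symm {V : Type*} {G : CCInst V} {u v : V}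
    (h : hostileSuper G u v) : hostileSuper G v u := by
  obtain ⟨hn, a, b, ha, hb, hab⟩ := h
  exact ⟨fun h' => hn h'.symm, b, a, hb, ha, by rwa [Sym2.eq_swap]⟩

/-- The two edges of a dangerous pair carry total LP value at least `1`: if the three
supernodes are distinct this is the triangle inequality with `X⁻ = 0` on the hostile pair, and
otherwise one of the two edges itself joins hostile supernodes and has value `1`. -/
lemma one_le_of_isDangerousPair {V : Type*} [DecidableEq V] {G : CCInst V}
    {D : Finset (Sym2 V × Sym2 V)} {Xp Xn : Sym2 V → ℝ} (hsol : IsLPSol G D Xp Xn)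
    {e f : Sym2 V} (h : IsDangerousPair G e f) :
    1 ≤ xval G Xp Xn e + xval G Xp Xn f := by
  obtain ⟨a, b, c, d, rfl, rfl, he, hf, hbc, had⟩ := h
  simp only [xval, he, hf, if_true]
  have hcd : Xp s(b, d) = Xp s(c, d) := hsol.congr_p _ _ _ _ hbc .refl
  have h1 := hsol.nonneg_p s(a, b)
  have h2 := hsol.nonneg_p s(c, d)
  by_cases hab : sameSuper G a b
  · have := hsol.host_p _ _ (had.congr_left hab)
    linarith
  by_cases hbd : sameSuper G b d
  · have := hsol.host_p _ _ (had.symm.congr_left hbd.symm)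
    rw [Sym2.eq_swap] at this
    linarith
  have h3 := hsol.tri_ppn a b d hab hbd had.1
  have h4 := hsol.host_n _ _ had
  linarith

lemma Partner.symm {V : Type*} {D : Finset (Sym2 V × Sym2 V)} {e f : Sym2 V}
    (h : Partner D e f) : Partner D f e := Or.symm h

lemma Partner.unique {V : Type*} {D : Finset (Sym2 V × Sym2 V)} (hD : EdgeDisjoint D)
    {e f f' : Sym2 V} (h : Partner D e f) (h' : Partner D e f') : f = f' := by
  rcases h with h | h <;> rcases h' with h' | h' <;>
  · have := hD _ h _ h' e (by simp [InPair]) (by simp [InPair])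
    simp only [Prod.mk.injEq] at this
    grind

lemma exists_partner {V : Type*} {D : Finset (Sym2 V × Sym2 V)} {e : Sym2 V}
    (h : e ∈ EDset D) : ∃ f, Partner D e f := by
  obtain ⟨⟨p, q⟩, hp, rfl | rfl⟩ := h
  · exact ⟨q, Or.inl hp⟩
  · exact ⟨p, Or.inr hp⟩

lemma Partner.mem_EDset {V : Type*} {D : Finset (Sym2 V × Sym2 V)} {e f : Sym2 V}
    (h : Partner D e f) : e ∈ EDset D :=
  h.elim (fun h => ⟨_, h, Or.inl rfl⟩) (fun h => ⟨_, h, Or.inr rfl⟩)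

lemma Partner.mem_Eb {V : Type*} [Fintype V] [DecidableEq V] {G : CCInst V}
    {D : Finset (Sym2 V × Sym2 V)} {Xp Xn : Sym2 V → ℝ} (hD : EdgeDisjoint D)
    {e f : Sym2 V} (h : Partner D e f) (he : e ∈ Eb G D Xp Xn) : f ∈ Eb G D Xp Xn := by
  simp only [Eb, Finset.mem_filter] at he ⊢
  exact ⟨he.2.2 f h, h.symm.mem_EDset, fun g hg => h.symm.unique hD hg ▸ he.1⟩

/-- Lemma 3.5 (d).  `|E^b| ≤ 2 ∑_{ij ∈ E^b} x_{ij}`. -/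
theorem stmt9 {V : Type*} [Fintype V] [DecidableEq V] (G : CCInst V)
    (D : Finset (Sym2 V × Sym2 V)) (Xp Xn : Sym2 V → ℝ)
    (hG : ConsistentForm G) (hD : MaximalDangerous G D)
    (hsol : IsLPSol G D Xp Xn) :
    ((Eb G D Xp Xn).card : ℝ) ≤ 2 * ∑ e ∈ Eb G D Xp Xn, xval G Xp Xn e := by
  have hdis : EdgeDisjoint D := hD.1.2
  have hex : ∀ e : Sym2 V, ∃ f, e ∈ Eb G D Xp Xn → Partner D e f := fun e => by
    by_cases he : e ∈ Eb G D Xp Xn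
    · obtain ⟨f, hf⟩ := exists_partner (Finset.mem_filter.1 he).2.1
      exact ⟨f, fun _ => hf⟩
    · exact ⟨e, fun h => absurd h he⟩
  choose ρ hρ using hex
  have hmem : ∀ e ∈ Eb G D Xp Xn, ρ e ∈ Eb G D Xp Xn := fun e he =>
    (hρ e he).mem_Eb hdis he
  have hinv : ∀ e ∈ Eb G D Xp Xn, ρ (ρ e) = e := fun e he =>
    (hρ _ (hmem e he)).unique hdis (hρ e he).symm
  have hsum : ∑ e ∈ Eb G D Xp Xn, xval G Xp Xn (ρ e) = ∑ e ∈ Eb G D Xp Xn, xval G Xp Xn e :=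
    Finset.sum_nbij' ρ ρ hmem hmem hinv hinv fun _ _ => rfl
  have hone : ∀ e ∈ Eb G D Xp Xn, (1 : ℝ) ≤ xval G Xp Xn e + xval G Xp Xn (ρ e) := by
    intro e he
    rcases hρ e he with h | h
    · exact one_le_of_isDangerousPair hsol (hD.1.1 _ h)
    · rw [add_comm]
      exact one_le_of_isDangerousPair hsol (hD.1.1 _ h)
  calc ((Eb G D Xp Xn).card : ℝ) = ∑ _e ∈ Eb G D Xp Xn, (1 : ℝ) := by simp
    _ ≤ ∑ e ∈ Eb G D Xp Xn, (xval G Xp Xn e + xval G Xp Xn (ρ e)) := Finset.sum_le_sum hone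
    _ = 2 * ∑ e ∈ Eb G D Xp Xn, xval G Xp Xn e := by
      rw [Finset.sum_add_distrib, hsum, two_mul]

end CCC
end
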